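/- Let s₁, s₂ ≥ 0 with s₁ + s₂ > 2. There is a constant C depending only on s₁ and s₂ such that for every smooth compactly supported f : ℝ³ → ℂ, writing f̂(ξ,z) = ∫_{ℝ²} e^{−2πi y·ξ} f(y,z) dy for the partial Fourier transform in the horizontal variable, one has sup_{y ∈ ℝ², z ≤ 0} |f(y,z)|² ≤ C ( ∫_{ℝ²} ∫_{−∞}^{0} (1+|ξ|²)^{s₂} |∂_z f̂(ξ,z)|² dz dξ )^{1/2} · ( ∫_{ℝ²} ∫_{−∞}^{0} (1+|ξ|²)^{s₁} |f̂(ξ,z)|² dz dξ )^{1/2}. -/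

import Mathlib

open MeasureTheory

/-- Partial Fourier transform in the horizontal variable `y ∈ ℝ²`:
`f̂(ξ,z) = ∫_{ℝ²} e^{−2πi y·ξ} f(y,z) dy`. -/
noncomputable def partialFourier (f : ((Fin 2 → ℝ) × ℝ) → ℂ) (ξ : Fin 2 → ℝ) (z : ℝ) : ℂ :=
  ∫ y : Fin 2 → ℝ,
    Complex.exp (-((2 * Real.pi * ∑ i : Fin 2, y i * ξ i : ℝ) : ℂ) * Complex.I) * f (y, z)

/-!
Fix a frequency `ξ`. Integrating `∂_z |f̂|²` from `-∞` gives, for `z ≤ 0`,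
`|f̂(ξ,z)|² ≤ 2 ∫_{t<0} |f̂| |∂_t f̂| dt`.
Distribute the weight `(1+|ξ|²)^{(s₁+s₂)/2}` over the two factors, integrate in `ξ` and apply
Cauchy–Schwarz in `(ξ,t)`: this bounds the squared `H^{(s₁+s₂)/2}(ℝ²)` norm of every slice `f(·,z)`
by twice the product of the two tangential norms. The slice is then bounded pointwise by Fourier
inversion and Cauchy–Schwarz, since `(1+|ξ|²)^{-(s₁+s₂)/2}` is integrable on `ℝ²` exactly when
`s₁ + s₂ > 2`.
-/

open Filter Set Topology Module SchwartzMap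
open scoped FourierTransform LineDeriv RealInnerProductSpace

section CauchySchwarz

variable {α E F : Type*} [MeasurableSpace α] {μ : Measure α} [NormedAddCommGroup E]
  [NormedAddCommGroup F]

theorem integral_norm_mul_norm_le_sqrt_mul_sqrt {f : α → E} {g : α → F} (hf : MemLp f 2 μ)
    (hg : MemLp g 2 μ) :
    ∫ x, ‖f x‖ * ‖g x‖ ∂μ ≤ √(∫ x, ‖f x‖ ^ 2 ∂μ) * √(∫ x, ‖g x‖ ^ 2 ∂μ) := by
  simpa only [Real.rpow_two, Real.sqrt_eq_rpow] using
    integral_mul_le_Lp_mul_Lq_of_nonneg Real.HolderConjugate.two_two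
      (ae_of_all _ fun x ↦ norm_nonneg (f x)) (ae_of_all _ fun x ↦ norm_nonneg (g x))
      (by simpa using hf.norm) (by simpa using hg.norm)

end CauchySchwarz

section HalfLine

variable {E : Type*} [NormedAddCommGroup E] [InnerProductSpace ℝ E]

theorem norm_sq_le_two_mul_integral_Iic {u u' : ℝ → E} {z : ℝ}
    (hderiv : ∀ x, HasDerivAt u (u' x) x) (hzero : Tendsto u atBot (𝓝 0))
    (hint : IntegrableOn (fun x ↦ ‖u x‖ * ‖u' x‖) (Iic z)) :
    ‖u z‖ ^ 2 ≤ 2 * ∫ x in Iic z, ‖u x‖ * ‖u' x‖ := by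
  have hderiv_sq (x : ℝ) : HasDerivAt (‖u ·‖ ^ 2) (2 * ⟪u x, u' x⟫) x := (hderiv x).norm_sq
  have hbound (x : ℝ) : ‖2 * ⟪u x, u' x⟫‖ ≤ 2 * (‖u x‖ * ‖u' x‖) := by
    rw [norm_mul, Real.norm_two]
    gcongr
    exact norm_inner_le_norm _ _
  have hmeas : StronglyMeasurable fun x ↦ 2 * ⟪u x, u' x⟫ := by
    rw [show (fun x ↦ 2 * ⟪u x, u' x⟫) = deriv (‖u ·‖ ^ 2) from
      funext fun x ↦ (hderiv_sq x).deriv.symm]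
    exact stronglyMeasurable_deriv _
  have hint_inner : IntegrableOn (fun x ↦ 2 * ⟪u x, u' x⟫) (Iic z) :=
    (hint.const_mul 2).mono' hmeas.aestronglyMeasurable (ae_of_all _ hbound)
  have hzero_sq : Tendsto (‖u ·‖ ^ 2) atBot (𝓝 0) := by
    simpa using hzero.norm.pow 2
  calc ‖u z‖ ^ 2 = ∫ x in Iic z, 2 * ⟪u x, u' x⟫ := by
        simpa using
          (integral_Iic_of_hasDerivAt_of_tendsto' (fun x _ ↦ hderiv_sq x) hint_inner hzero_sq).symm
    _ ≤ ∫ x in Iic z, 2 * (‖u x‖ * ‖u' x‖) :=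
        integral_mono hint_inner (hint.const_mul 2) fun x ↦ (le_abs_self _).trans (hbound x)
    _ = 2 * ∫ x in Iic z, ‖u x‖ * ‖u' x‖ := integral_const_mul _ _

theorem norm_sq_le_two_mul_integral_Iio {u u' : ℝ → E} {a z : ℝ}
    (hderiv : ∀ x, HasDerivAt u (u' x) x) (hzero : Tendsto u atBot (𝓝 0))
    (hint : IntegrableOn (fun x ↦ ‖u x‖ * ‖u' x‖) (Iio a)) (hz : z ≤ a) :
    ‖u z‖ ^ 2 ≤ 2 * ∫ x in Iio a, ‖u x‖ * ‖u' x‖ := by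
  have hint_Iic : IntegrableOn (fun x ↦ ‖u x‖ * ‖u' x‖) (Iic z) :=
    (integrableOn_Iic_iff_integrableOn_Iio enorm_ne_top).2 (hint.mono_set (Iio_subset_Iio hz))
  calc ‖u z‖ ^ 2 ≤ 2 * ∫ x in Iic z, ‖u x‖ * ‖u' x‖ :=
        norm_sq_le_two_mul_integral_Iic hderiv hzero hint_Iic
    _ = 2 * ∫ x in Iio z, ‖u x‖ * ‖u' x‖ := by rw [integral_Iic_eq_integral_Iio]
    _ ≤ 2 * ∫ x in Iio a, ‖u x‖ * ‖u' x‖ := by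
        gcongr 2 * ?_
        exact setIntegral_mono_set hint (ae_of_all _ fun x ↦ by positivity)
          (Iio_subset_Iio hz).eventuallyLE

theorem mul_norm_sq_le_two_mul_integral_Iio {u u' : ℝ → E} {a z c c' : ℝ}
    (hderiv : ∀ x, HasDerivAt u (u' x) x) (hzero : Tendsto u atBot (𝓝 0)) (hc : 0 < c)
    (hc' : 0 < c') (hint : IntegrableOn (fun x ↦ ‖c • u x‖ * ‖c' • u' x‖) (Iio a)) (hz : z ≤ a) :
    c * c' * ‖u z‖ ^ 2 ≤ 2 * ∫ x in Iio a, ‖c • u x‖ * ‖c' • u' x‖ := by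
  have hmul (x : ℝ) : ‖c • u x‖ * ‖c' • u' x‖ = c * c' * (‖u x‖ * ‖u' x‖) := by
    rw [norm_smul_of_nonneg hc.le, norm_smul_of_nonneg hc'.le, mul_mul_mul_comm]
  simp only [hmul] at hint
  have hint_unweighted : IntegrableOn (fun x ↦ ‖u x‖ * ‖u' x‖) (Iio a) :=
    (integrable_const_mul_iff (mul_pos hc hc').ne'.isUnit _).1 hint
  calc c * c' * ‖u z‖ ^ 2 ≤ c * c' * (2 * ∫ x in Iio a, ‖u x‖ * ‖u' x‖) := by
        gcongr
        exact norm_sq_le_two_mul_integral_Iio hderiv hzero hint_unweighted hz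
    _ = 2 * ∫ x in Iio a, ‖c • u x‖ * ‖c' • u' x‖ := by
        simp only [hmul, integral_const_mul]
        ring

theorem integral_mul_norm_sq_le_two_mul_sqrt_mul_sqrt {α : Type*} [MeasurableSpace α]
    {μ : Measure α} [SFinite μ] {u u' : α → ℝ → E} {w w' : α → ℝ} {a z : ℝ}
    (hderiv : ∀ x t, HasDerivAt (u x) (u' x t) t) (hzero : ∀ x, Tendsto (u x) atBot (𝓝 0))
    (hw : ∀ x, 0 < w x) (hw' : ∀ x, 0 < w' x)
    (hu : MemLp (fun p : α × ℝ ↦ w p.1 • u p.1 p.2) 2 (μ.prod (volume.restrict (Iio a))))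
    (hu' : MemLp (fun p : α × ℝ ↦ w' p.1 • u' p.1 p.2) 2 (μ.prod (volume.restrict (Iio a))))
    (hz : z ≤ a) :
    ∫ x, w x * w' x * ‖u x z‖ ^ 2 ∂μ ≤
      2 * (√(∫ x, (∫ t in Iio a, ‖w x • u x t‖ ^ 2) ∂μ) *
        √(∫ x, (∫ t in Iio a, ‖w' x • u' x t‖ ^ 2) ∂μ)) := by
  have hint : Integrable (fun p : α × ℝ ↦ ‖w p.1 • u p.1 p.2‖ * ‖w' p.1 • u' p.1 p.2‖)
      (μ.prod (volume.restrict (Iio a))) := hu.norm.integrable_mul hu'.norm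
  have hslice : ∀ᵐ x ∂μ, w x * w' x * ‖u x z‖ ^ 2 ≤
      2 * ∫ t in Iio a, ‖w x • u x t‖ * ‖w' x • u' x t‖ := by
    filter_upwards [hint.prod_right_ae] with x hx
    exact mul_norm_sq_le_two_mul_integral_Iio (hderiv x) (hzero x) (hw x) (hw' x) hx hz
  have hnonneg (x : α) : 0 ≤ w x * w' x * ‖u x z‖ ^ 2 := by
    have := hw x
    have := hw' x
    positivity
  calc ∫ x, w x * w' x * ‖u x z‖ ^ 2 ∂μ
      ≤ ∫ x, 2 * (∫ t in Iio a, ‖w x • u x t‖ * ‖w' x • u' x t‖) ∂μ :=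
        integral_mono_of_nonneg (ae_of_all _ hnonneg) (hint.integral_prod_left.const_mul 2) hslice
    _ = 2 * ∫ p, ‖w p.1 • u p.1 p.2‖ * ‖w' p.1 • u' p.1 p.2‖
          ∂(μ.prod (volume.restrict (Iio a))) := by
        rw [integral_const_mul, integral_prod _ hint]
    _ ≤ 2 * (√(∫ x, (∫ t in Iio a, ‖w x • u x t‖ ^ 2) ∂μ) *
          √(∫ x, (∫ t in Iio a, ‖w' x • u' x t‖ ^ 2) ∂μ)) := by
        gcongr
        grw [integral_norm_mul_norm_le_sqrt_mul_sqrt hu hu', integral_prod _ hu.norm.integrable_sq,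
          integral_prod _ hu'.norm.integrable_sq]

end HalfLine

section Slice

variable {V W E : Type*} [NormedAddCommGroup V] [NormedSpace ℝ V] [NormedAddCommGroup W]
  [NormedSpace ℝ W] [NormedAddCommGroup E] [NormedSpace ℝ E]

theorem norm_iteratedFDeriv_comp_prodMk_left_le {f : V × W → E} {n : ℕ} (hf : ContDiff ℝ n f)
    (y : V) (z : W) :
    ‖iteratedFDeriv ℝ n (fun y ↦ f (y, z)) y‖ ≤ ‖iteratedFDeriv ℝ n f (y, z)‖ := by
  let translate : V × W → E := fun x ↦ f (x + (0, z))
  have htranslate : ContDiff ℝ n translate := hf.comp (contDiff_id.add contDiff_const)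
  have hslice : (fun y ↦ f (y, z)) = translate ∘ ContinuousLinearMap.inl ℝ V W := by
    ext y
    simp [translate]
  calc ‖iteratedFDeriv ℝ n (fun y ↦ f (y, z)) y‖
      = ‖(iteratedFDeriv ℝ n f (y, z)).compContinuousLinearMap
          fun _ ↦ ContinuousLinearMap.inl ℝ V W‖ := by
        rw [hslice, ContinuousLinearMap.iteratedFDeriv_comp_right _ htranslate y le_rfl,
          iteratedFDeriv_comp_add_right]
        simp
    _ ≤ ‖iteratedFDeriv ℝ n f (y, z)‖ * ∏ _ : Fin n, ‖ContinuousLinearMap.inl ℝ V W‖ :=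
        ContinuousMultilinearMap.norm_compContinuousLinearMap_le _ _
    _ ≤ ‖iteratedFDeriv ℝ n f (y, z)‖ := by
        refine mul_le_of_le_one_right (norm_nonneg _) (Finset.prod_le_one (by simp) fun _ _ ↦ ?_)
        exact ContinuousLinearMap.norm_inl_le_one ℝ V W

theorem hasTemperateGrowth_prodMk_left (z : W) : (fun y : V ↦ (y, z)).HasTemperateGrowth := by
  have h : (fun y : V ↦ (y, z)) = fun y ↦ ContinuousLinearMap.inl ℝ V W y + (0, z) := by simp
  rw [h]
  fun_prop

/-- The restriction `y ↦ f (y, z)` of a Schwartz function on `V × W` to a horizontal slice, bundled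
as a Schwartz function so that the Fourier theory of `𝓢(V, E)` applies to it. -/
noncomputable def schwartzSlice (f : 𝓢(V × W, E)) (z : W) : 𝓢(V, E) :=
  have hisometry : Isometry fun y : V ↦ (y, z) := Isometry.of_dist_eq fun y y' ↦ by simp
  compCLMOfAntilipschitz ℝ (hasTemperateGrowth_prodMk_left z) hisometry.antilipschitz f

@[simp]
theorem schwartzSlice_apply (f : 𝓢(V × W, E)) (z : W) (y : V) : schwartzSlice f z y = f (y, z) :=
  rfl

theorem one_add_norm_pow_mul_norm_le_sup_seminorm (f : 𝓢(V, E)) (k : ℕ) (y : V) :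
    (1 + ‖y‖) ^ k * ‖f y‖ ≤
      2 ^ k * (Finset.Iic (k, 0)).sup (fun m ↦ SchwartzMap.seminorm ℝ m.1 m.2) f := by
  rw [← norm_iteratedFDeriv_zero (𝕜 := ℝ) (f := f)]
  exact one_add_le_sup_seminorm_apply (𝕜 := ℝ) (m := (k, 0)) le_rfl le_rfl f y

theorem exists_one_add_norm_pow_mul_seminorm_schwartzSlice_le (f : 𝓢(V × W, E)) (k n l : ℕ) :
    ∃ C, ∀ z, (1 + ‖z‖) ^ l * SchwartzMap.seminorm ℝ k n (schwartzSlice f z) ≤ C := by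
  let C := 2 ^ (l + k) * (Finset.Iic (l + k, n)).sup (fun m ↦ SchwartzMap.seminorm ℝ m.1 m.2) f
  refine ⟨C, fun z ↦ ?_⟩
  rw [← le_div_iff₀' (by positivity)]
  refine seminorm_le_bound ℝ k n _ (by positivity) fun y ↦ ?_
  rw [le_div_iff₀' (by positivity)]
  calc (1 + ‖z‖) ^ l * (‖y‖ ^ k * ‖iteratedFDeriv ℝ n (schwartzSlice f z) y‖)
      ≤ (1 + ‖(y, z)‖) ^ l * ((1 + ‖(y, z)‖) ^ k * ‖iteratedFDeriv ℝ n f (y, z)‖) := by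
        gcongr
        · exact norm_snd_le (y, z)
        · exact (norm_fst_le (y, z)).trans (by simp)
        · exact norm_iteratedFDeriv_comp_prodMk_left_le (f.smooth n) y z
    _ = (1 + ‖(y, z)‖) ^ (l + k) * ‖iteratedFDeriv ℝ n f (y, z)‖ := by ring
    _ ≤ C := one_add_le_sup_seminorm_apply (𝕜 := ℝ) (m := (l + k, n)) le_rfl le_rfl f (y, z)

theorem exists_one_add_norm_pow_mul_continuous_seminorm_schwartzSlice_le (f : 𝓢(V × W, E))
    {q : Seminorm ℝ 𝓢(V, E)} (hq : Continuous q) (l : ℕ) :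
    ∃ C, ∀ z, (1 + ‖z‖) ^ l * q (schwartzSlice f z) ≤ C := by
  obtain ⟨s, K, -, hqs⟩ := Seminorm.bound_of_continuous (schwartz_withSeminorms ℝ V E) q hq
  choose B hB using fun m : ℕ × ℕ ↦
    exists_one_add_norm_pow_mul_seminorm_schwartzSlice_le f m.1 m.2 l
  have hB_nonneg (m : ℕ × ℕ) : 0 ≤ B m := le_trans (by positivity) (hB m 0)
  refine ⟨K * ∑ m ∈ s, B m, fun z ↦ ?_⟩
  have hsup : s.sup (schwartzSeminormFamily ℝ V E) (schwartzSlice f z) ≤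
      (∑ m ∈ s, B m) / (1 + ‖z‖) ^ l := by
    refine Seminorm.finset_sup_apply_le
      (div_nonneg (Finset.sum_nonneg fun m _ ↦ hB_nonneg m) (by positivity)) fun m hm ↦ ?_
    rw [le_div_iff₀' (by positivity)]
    exact (hB m z).trans (Finset.single_le_sum (fun m _ ↦ hB_nonneg m) hm)
  rw [le_div_iff₀' (by positivity)] at hsup
  calc (1 + ‖z‖) ^ l * q (schwartzSlice f z)
      ≤ (1 + ‖z‖) ^ l * (K * s.sup (schwartzSeminormFamily ℝ V E) (schwartzSlice f z)) := by
        gcongr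
        exact hqs _
    _ = K * ((1 + ‖z‖) ^ l * s.sup (schwartzSeminormFamily ℝ V E) (schwartzSlice f z)) := by ring
    _ ≤ K * ∑ m ∈ s, B m := by gcongr

end Slice

section TangentialFourier

variable {V E : Type*} [NormedAddCommGroup V] [InnerProductSpace ℝ V] [FiniteDimensional ℝ V]
  [MeasurableSpace V] [BorelSpace V] [NormedAddCommGroup E] [NormedSpace ℂ E]

/-- The Fourier transform of `f : V × W → E` in its first variable, with kernel `e^{-2πi⟪y,ξ⟫}`. It
is the coordinate-free form of `partialFourier`, with the Euclidean norm on the horizontal space. -/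
noncomputable def tangentialFourier {W : Type*} (f : V × W → E) (ξ : V) (z : W) : E :=
  𝓕 (fun y ↦ f (y, z)) ξ

theorem stronglyMeasurable_tangentialFourier {W : Type*} [TopologicalSpace W]
    [TopologicalSpace.PseudoMetrizableSpace W] [SecondCountableTopology W] [MeasurableSpace W]
    [OpensMeasurableSpace W] {f : V × W → E} (hf : Continuous f) :
    StronglyMeasurable fun x : V × W ↦ tangentialFourier f x.1 x.2 := by
  have hintegrand : Continuous fun p : (V × W) × V ↦ 𝐞 (-⟪p.2, p.1.1⟫) • f (p.2, p.1.2) := by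
    fun_prop
  simp only [tangentialFourier, Real.fourier_eq]
  exact hintegrand.stronglyMeasurable.integral_prod_right

theorem exists_one_add_norm_pow_mul_norm_tangentialFourier_le {W : Type*} [NormedAddCommGroup W]
    [NormedSpace ℝ W] (f : 𝓢(V × W, E)) (k : ℕ) :
    ∃ C, ∀ ξ z, (1 + ‖(ξ, z)‖) ^ k * ‖tangentialFourier f ξ z‖ ≤ C := by
  let p : Seminorm ℝ 𝓢(V, E) := (Finset.Iic (k, 0)).sup fun m ↦ SchwartzMap.seminorm ℝ m.1 m.2
  have hp : Continuous p :=
    Seminorm.continuous_finsetSup fun m _ ↦ (schwartz_withSeminorms ℝ V E).continuous_seminorm m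
  let q : Seminorm ℝ 𝓢(V, E) :=
    p.comp ((FourierTransform.fourierCLM ℂ 𝓢(V, E)).restrictScalars ℝ).toLinearMap
  have hq : Continuous q := hp.comp (FourierTransform.fourierCLM ℂ 𝓢(V, E)).continuous
  obtain ⟨C, hC⟩ := exists_one_add_norm_pow_mul_continuous_seminorm_schwartzSlice_le f hq k
  refine ⟨2 ^ k * C, fun ξ z ↦ ?_⟩
  have hnorm : 1 + ‖(ξ, z)‖ ≤ (1 + ‖ξ‖) * (1 + ‖z‖) := by
    rw [Prod.norm_mk]
    nlinarith [max_le_add_of_nonneg (norm_nonneg ξ) (norm_nonneg z),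
      mul_nonneg (norm_nonneg ξ) (norm_nonneg z)]
  have hfourier : (1 + ‖ξ‖) ^ k * ‖tangentialFourier f ξ z‖ ≤ 2 ^ k * q (schwartzSlice f z) :=
    one_add_norm_pow_mul_norm_le_sup_seminorm (𝓕 (schwartzSlice f z)) k ξ
  calc (1 + ‖(ξ, z)‖) ^ k * ‖tangentialFourier f ξ z‖
      ≤ ((1 + ‖ξ‖) * (1 + ‖z‖)) ^ k * ‖tangentialFourier f ξ z‖ := by gcongr
    _ = (1 + ‖z‖) ^ k * ((1 + ‖ξ‖) ^ k * ‖tangentialFourier f ξ z‖) := by rw [mul_pow]; ring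
    _ ≤ (1 + ‖z‖) ^ k * (2 ^ k * q (schwartzSlice f z)) := by gcongr
    _ = 2 ^ k * ((1 + ‖z‖) ^ k * q (schwartzSlice f z)) := by ring
    _ ≤ 2 ^ k * C := by
        gcongr
        exact hC z

theorem hasDerivAt_tangentialFourier (f : 𝓢(V × ℝ, E)) (ξ : V) (z : ℝ) :
    HasDerivAt (tangentialFourier f ξ)
      (tangentialFourier ⇑(∂_{((0 : V), (1 : ℝ))} f : 𝓢(V × ℝ, E)) ξ z) z := by
  let f' : 𝓢(V × ℝ, E) := ∂_{((0 : V), (1 : ℝ))} f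
  let k := finrank ℝ V + 1
  let C := 2 ^ k * (Finset.Iic (k, 0)).sup (fun m ↦ SchwartzMap.seminorm ℝ m.1 m.2) f'
  have hderiv (y : V) (t : ℝ) : HasDerivAt (fun t ↦ f (y, t)) (f' (y, t)) t :=
    f.differentiableAt.hasFDerivAt.comp_hasDerivAt t
      ((hasDerivAt_const t y).prodMk (hasDerivAt_id t))
  have hbound (y : V) (t : ℝ) : ‖f' (y, t)‖ ≤ C * (1 + ‖y‖) ^ (-(k : ℝ)) := by
    rw [Real.rpow_neg (by positivity), Real.rpow_natCast, ← div_eq_mul_inv,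
      le_div_iff₀' (by positivity)]
    calc (1 + ‖y‖) ^ k * ‖f' (y, t)‖ ≤ (1 + ‖(y, t)‖) ^ k * ‖f' (y, t)‖ := by
          gcongr
          exact norm_fst_le (y, t)
      _ ≤ C := one_add_norm_pow_mul_norm_le_sup_seminorm f' k (y, t)
  have hbound_int : Integrable fun y : V ↦ C * (1 + ‖y‖) ^ (-(k : ℝ)) :=
    (integrable_one_add_norm (by simp [k])).const_mul C
  have hmeas (g : 𝓢(V × ℝ, E)) (t : ℝ) :
      AEStronglyMeasurable (fun y : V ↦ 𝐞 (-⟪y, ξ⟫) • g (y, t)) := by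
    have := g.continuous
    exact Continuous.aestronglyMeasurable (by fun_prop)
  have hint : Integrable fun y : V ↦ 𝐞 (-⟪y, ξ⟫) • f (y, z) :=
    (schwartzSlice f z).integrable.mono (hmeas f z) (by simp)
  exact (hasDerivAt_integral_of_dominated_loc_of_deriv_le univ_mem
    (.of_forall (hmeas f)) hint (hmeas f' z)
    (ae_of_all _ fun y t _ ↦ by simpa using hbound y t) hbound_int
    (ae_of_all _ fun y t _ ↦ (hderiv y t).const_smul (𝐞 (-⟪y, ξ⟫)))).2

theorem tendsto_tangentialFourier_atBot (f : 𝓢(V × ℝ, E)) (ξ : V) :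
    Tendsto (tangentialFourier f ξ) atBot (𝓝 0) := by
  obtain ⟨C, hC⟩ := exists_one_add_norm_pow_mul_norm_tangentialFourier_le f 1
  have hle (z : ℝ) : ‖tangentialFourier f ξ z‖ ≤ C / (1 + ‖z‖) := by
    rw [le_div_iff₀' (by positivity)]
    refine le_trans ?_ (hC ξ z)
    rw [pow_one]
    gcongr
    exact norm_snd_le (ξ, z)
  refine squeeze_zero_norm hle (Tendsto.const_div_atTop ?_ C)
  exact tendsto_atTop_add_const_left _ _ tendsto_abs_atBot_atTop

end TangentialFourier

section Weights

theorem rpow_half_sq {x : ℝ} (hx : 0 ≤ x) (s : ℝ) : (x ^ (s / 2)) ^ 2 = x ^ s := by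
  rw [← Real.rpow_mul_natCast hx]
  norm_num

theorem one_add_sq_rpow_half_le {r : ℝ} (hr : 0 ≤ r) (s : ℝ) :
    (1 + r ^ 2) ^ (s / 2) ≤ (1 + r) ^ ⌈|s|⌉₊ := by
  calc (1 + r ^ 2) ^ (s / 2) ≤ (1 + r ^ 2) ^ (⌈|s|⌉₊ / 2 : ℝ) := by
        gcongr
        · nlinarith
        · exact (le_abs_self s).trans (Nat.le_ceil _)
    _ ≤ ((1 + r) ^ 2) ^ (⌈|s|⌉₊ / 2 : ℝ) := by
        gcongr
        nlinarith
    _ = (1 + r) ^ ⌈|s|⌉₊ := by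
        rw [← Real.rpow_natCast_mul (by positivity)]
        simp [mul_div_cancel₀]

theorem memLp_two_of_one_add_norm_pow_mul_norm_le {X E : Type*} [NormedAddCommGroup X]
    [NormedSpace ℝ X] [FiniteDimensional ℝ X] [MeasurableSpace X] [BorelSpace X]
    [NormedAddCommGroup E] {μ : Measure X} [μ.IsAddHaarMeasure] {g : X → E}
    (hg : AEStronglyMeasurable g μ) {k : ℕ} (hk : finrank ℝ X < 2 * k) {C : ℝ}
    (hC : ∀ x, (1 + ‖x‖) ^ k * ‖g x‖ ≤ C) : MemLp g 2 μ := by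
  rw [memLp_two_iff_integrable_sq_norm hg]
  have hint : Integrable (fun x : X ↦ C ^ 2 * (1 + ‖x‖) ^ (-(2 * k : ℝ))) μ :=
    (integrable_one_add_norm (by exact_mod_cast hk)).const_mul _
  refine hint.mono' (hg.norm.pow 2) (ae_of_all _ fun x ↦ ?_)
  have hpow : (1 + ‖x‖) ^ (-(2 * k : ℝ)) = (((1 + ‖x‖) ^ k) ^ 2)⁻¹ := by
    rw [Real.rpow_neg (by positivity), ← pow_mul', ← Real.rpow_natCast]
    norm_cast
  rw [Real.norm_of_nonneg (by positivity), hpow, ← div_eq_mul_inv, le_div_iff₀' (by positivity),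
    ← mul_pow]
  gcongr
  exact hC x

end Weights

section Sobolev

variable {V E : Type*} [NormedAddCommGroup V] [InnerProductSpace ℝ V] [FiniteDimensional ℝ V]
  [MeasurableSpace V] [BorelSpace V] [NormedAddCommGroup E] [NormedSpace ℂ E]

theorem memLp_one_add_norm_sq_rpow_smul_tangentialFourier (f : 𝓢(V × ℝ, E)) (s : ℝ) :
    MemLp (fun x : V × ℝ ↦ (1 + ‖x.1‖ ^ 2) ^ (s / 2) • tangentialFourier f x.1 x.2) 2
      (volume.prod volume) := by
  let k := finrank ℝ (V × ℝ)
  let m := ⌈|s|⌉₊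
  have hk : finrank ℝ (V × ℝ) < 2 * k := by
    simp [k]
  obtain ⟨C, hC⟩ := exists_one_add_norm_pow_mul_norm_tangentialFourier_le f (k + m)
  have hmeas : StronglyMeasurable fun x : V × ℝ ↦
      (1 + ‖x.1‖ ^ 2) ^ (s / 2) • tangentialFourier f x.1 x.2 :=
    StronglyMeasurable.smul (𝕜 := ℝ) (Measurable.stronglyMeasurable (by fun_prop))
      (stronglyMeasurable_tangentialFourier f.continuous)
  refine memLp_two_of_one_add_norm_pow_mul_norm_le hmeas.aestronglyMeasurable hk (C := C) fun x ↦ ?_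
  calc (1 + ‖x‖) ^ k * ‖(1 + ‖x.1‖ ^ 2) ^ (s / 2) • tangentialFourier f x.1 x.2‖
      = (1 + ‖x‖) ^ k * ((1 + ‖x.1‖ ^ 2) ^ (s / 2) * ‖tangentialFourier f x.1 x.2‖) := by
        rw [norm_smul_of_nonneg (by positivity)]
    _ ≤ (1 + ‖x‖) ^ k * ((1 + ‖x‖) ^ m * ‖tangentialFourier f x.1 x.2‖) := by
        gcongr
        grw [one_add_sq_rpow_half_le (norm_nonneg _), norm_fst_le x]
    _ = (1 + ‖x‖) ^ (k + m) * ‖tangentialFourier f x.1 x.2‖ := by ring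
    _ ≤ C := hC x.1 x.2

theorem norm_le_integral_norm_fourier [CompleteSpace E] (g : 𝓢(V, E)) (y : V) :
    ‖g y‖ ≤ ∫ ξ, ‖𝓕 (g : V → E) ξ‖ := by
  calc ‖g y‖ = ‖𝓕⁻ (𝓕 (g : V → E)) y‖ := by
        rw [← SchwartzMap.fourier_coe, ← SchwartzMap.fourierInv_coe,
          FourierTransform.fourierInv_fourier_eq]
    _ ≤ ∫ ξ, ‖𝓕 (g : V → E) ξ‖ := by
        rw [Real.fourierInv_eq]
        exact (norm_integral_le_integral_norm _).trans_eq (by simp)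

theorem norm_sq_le_integral_mul_integral_fourier [CompleteSpace E] (g : 𝓢(V, E)) {s : ℝ}
    (hs : (finrank ℝ V : ℝ) < 2 * s) (y : V) :
    ‖g y‖ ^ 2 ≤ (∫ ξ : V, (1 + ‖ξ‖ ^ 2) ^ (-s)) *
      ∫ ξ, (1 + ‖ξ‖ ^ 2) ^ s * ‖𝓕 (g : V → E) ξ‖ ^ 2 := by
  let weight (r : ℝ) (ξ : V) : ℝ := (1 + ‖ξ‖ ^ 2) ^ (r / 2)
  have hweight_nonneg (r : ℝ) (ξ : V) : 0 ≤ weight r ξ := by positivity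
  have hweight_sq (r : ℝ) (ξ : V) : weight r ξ ^ 2 = (1 + ‖ξ‖ ^ 2) ^ r :=
    rpow_half_sq (by positivity) r
  have hdecay : MemLp (weight (-s)) 2 := by
    rw [memLp_two_iff_integrable_sq (Measurable.aestronglyMeasurable (by fun_prop))]
    simp only [hweight_sq]
    simpa [neg_div] using integrable_rpow_neg_one_add_norm_sq hs
  have hfourier : MemLp (fun ξ ↦ weight s ξ • 𝓕 (g : V → E) ξ) 2 := by
    have h := (smulLeftCLM E (weight s) (𝓕 g)).memLp 2 (volume : Measure V)
    rwa [smulLeftCLM_apply (Function.hasTemperateGrowth_one_add_norm_sq_rpow V _)] at h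
  have hsplit (ξ : V) : ‖𝓕 (g : V → E) ξ‖ = ‖weight (-s) ξ‖ * ‖weight s ξ • 𝓕 (g : V → E) ξ‖ := by
    have hmul : weight (-s) ξ * weight s ξ = 1 := by
      rw [← Real.rpow_add (by positivity), neg_div, neg_add_cancel, Real.rpow_zero]
    rw [norm_smul, ← mul_assoc, ← norm_mul, hmul, norm_one, one_mul]
  have hsqrt : ‖g y‖ ≤ √(∫ ξ : V, (1 + ‖ξ‖ ^ 2) ^ (-s)) *
      √(∫ ξ, (1 + ‖ξ‖ ^ 2) ^ s * ‖𝓕 (g : V → E) ξ‖ ^ 2) := by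
    have h := integral_norm_mul_norm_le_sqrt_mul_sqrt hdecay hfourier
    simp only [← hsplit] at h
    simp only [norm_smul, mul_pow, Real.norm_of_nonneg, hweight_nonneg, hweight_sq] at h
    exact (norm_le_integral_norm_fourier g y).trans h
  calc ‖g y‖ ^ 2 ≤ (√(∫ ξ : V, (1 + ‖ξ‖ ^ 2) ^ (-s)) *
        √(∫ ξ, (1 + ‖ξ‖ ^ 2) ^ s * ‖𝓕 (g : V → E) ξ‖ ^ 2)) ^ 2 := by gcongr
    _ = _ := by
        rw [mul_pow, Real.sq_sqrt (integral_nonneg fun ξ ↦ by positivity),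
          Real.sq_sqrt (integral_nonneg fun ξ ↦ by positivity)]

end Sobolev

section Anisotropic

variable {V E : Type*} [NormedAddCommGroup V] [InnerProductSpace ℝ V] [FiniteDimensional ℝ V]
  [MeasurableSpace V] [BorelSpace V] [NormedAddCommGroup E]

/-- The tangential Sobolev norm `H^s_tan` of the half-space `V × (-∞, a)`. Its argument is the
partial Fourier transform of a function rather than the function itself, so that it also measures
`∂_z f` through `∂_z f̂`. -/
noncomputable def tanSobolevNorm (s a : ℝ) (u : V → ℝ → E) : ℝ :=
  √(∫ ξ, ∫ z in Iio a, (1 + ‖ξ‖ ^ 2) ^ s * ‖u ξ z‖ ^ 2)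

variable [InnerProductSpace ℂ E]

theorem integral_one_add_norm_sq_rpow_mul_tangentialFourier_le (f : 𝓢(V × ℝ, E)) (s₁ s₂ : ℝ)
    {a z : ℝ} (hz : z ≤ a) :
    ∫ ξ, (1 + ‖ξ‖ ^ 2) ^ ((s₁ + s₂) / 2) * ‖tangentialFourier f ξ z‖ ^ 2 ≤
      2 * (tanSobolevNorm s₁ a (tangentialFourier f) *
        tanSobolevNorm s₂ a fun ξ ↦ deriv (tangentialFourier f ξ)) := by
  let f' : 𝓢(V × ℝ, E) := ∂_{((0 : V), (1 : ℝ))} f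
  let _ : InnerProductSpace ℝ E := .complexToReal
  let weight (s : ℝ) (ξ : V) : ℝ := (1 + ‖ξ‖ ^ 2) ^ (s / 2)
  have hweight_pos (s : ℝ) (ξ : V) : 0 < weight s ξ := by positivity
  have hweight_sq (s : ℝ) (ξ : V) : weight s ξ ^ 2 = (1 + ‖ξ‖ ^ 2) ^ s :=
    rpow_half_sq (by positivity) s
  have hmul (ξ : V) : (1 + ‖ξ‖ ^ 2) ^ ((s₁ + s₂) / 2) = weight s₁ ξ * weight s₂ ξ := by
    rw [add_div, Real.rpow_add (by positivity)]
  have hderiv (ξ : V) : deriv (tangentialFourier f ξ) = tangentialFourier f' ξ :=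
    funext fun z ↦ (hasDerivAt_tangentialFourier f ξ z).deriv
  have hmemLp (g : 𝓢(V × ℝ, E)) (s : ℝ) :
      MemLp (fun p : V × ℝ ↦ weight s p.1 • tangentialFourier g p.1 p.2) 2
        (volume.prod (volume.restrict (Iio a))) :=
    (memLp_one_add_norm_sq_rpow_smul_tangentialFourier g s).mono_measure
      (Measure.prod_mono le_rfl Measure.restrict_le_self)
  have hnorm (g : 𝓢(V × ℝ, E)) (s : ℝ) :
      √(∫ ξ, ∫ t in Iio a, ‖weight s ξ • tangentialFourier g ξ t‖ ^ 2) =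
        tanSobolevNorm s a (tangentialFourier g) := by
    simp only [tanSobolevNorm, norm_smul, mul_pow, Real.norm_of_nonneg (hweight_pos _ _).le,
      hweight_sq]
  calc ∫ ξ, (1 + ‖ξ‖ ^ 2) ^ ((s₁ + s₂) / 2) * ‖tangentialFourier f ξ z‖ ^ 2
      = ∫ ξ, weight s₁ ξ * weight s₂ ξ * ‖tangentialFourier f ξ z‖ ^ 2 := by
        simp only [hmul]
    _ ≤ 2 * (√(∫ ξ, ∫ t in Iio a, ‖weight s₁ ξ • tangentialFourier f ξ t‖ ^ 2) *
          √(∫ ξ, ∫ t in Iio a, ‖weight s₂ ξ • tangentialFourier f' ξ t‖ ^ 2)) :=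
        integral_mul_norm_sq_le_two_mul_sqrt_mul_sqrt (w := weight s₁) (w' := weight s₂)
          (hasDerivAt_tangentialFourier f) (tendsto_tangentialFourier_atBot f) (hweight_pos s₁)
          (hweight_pos s₂) (hmemLp f s₁) (hmemLp f' s₂) hz
    _ = 2 * (tanSobolevNorm s₁ a (tangentialFourier f) *
          tanSobolevNorm s₂ a fun ξ ↦ deriv (tangentialFourier f ξ)) := by
        simp only [hnorm, hderiv]

theorem anisotropic_sobolev_general [CompleteSpace E] {s₁ s₂ : ℝ}
    (hs : (finrank ℝ V : ℝ) < s₁ + s₂) :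
    ∃ C, 0 < C ∧ ∀ (f : 𝓢(V × ℝ, E)) (a : ℝ) (y : V), ∀ z ≤ a,
      ‖f (y, z)‖ ^ 2 ≤ C * tanSobolevNorm s₂ a (fun ξ ↦ deriv (tangentialFourier f ξ)) *
        tanSobolevNorm s₁ a (tangentialFourier f) := by
  let K := ∫ ξ : V, (1 + ‖ξ‖ ^ 2) ^ (-((s₁ + s₂) / 2))
  refine ⟨2 * K + 1, by positivity, fun f a y z hz ↦ ?_⟩
  let N₁ := tanSobolevNorm s₁ a (tangentialFourier f)
  let N₂ := tanSobolevNorm s₂ a fun ξ ↦ deriv (tangentialFourier f ξ)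
  have hN₁ : 0 ≤ N₁ := Real.sqrt_nonneg _
  have hN₂ : 0 ≤ N₂ := Real.sqrt_nonneg _
  calc ‖f (y, z)‖ ^ 2
      ≤ K * ∫ ξ, (1 + ‖ξ‖ ^ 2) ^ ((s₁ + s₂) / 2) * ‖tangentialFourier f ξ z‖ ^ 2 :=
        norm_sq_le_integral_mul_integral_fourier (schwartzSlice f z) (by linarith) y
    _ ≤ K * (2 * (N₁ * N₂)) := by
        gcongr
        exact integral_one_add_norm_sq_rpow_mul_tangentialFourier_le f s₁ s₂ hz
    _ ≤ (2 * K + 1) * N₂ * N₁ := by nlinarith [mul_nonneg hN₁ hN₂]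

end Anisotropic

section Coordinates

theorem tangentialFourier_comp_ofLp (f : (Fin 2 → ℝ) × ℝ → ℂ) :
    tangentialFourier (fun x : EuclideanSpace ℝ (Fin 2) × ℝ ↦ f (x.1.ofLp, x.2)) =
      fun ξ ↦ partialFourier f ξ.ofLp := by
  ext ξ z
  rw [tangentialFourier, Real.fourier_eq', partialFourier,
    ← (EuclideanSpace.volume_preserving_symm_measurableEquiv_toLp (Fin 2)).integral_comp']
  simp [PiLp.inner_apply, mul_comm]

theorem tanSobolevNorm_comp_ofLp {ι E : Type*} [Fintype ι] [NormedAddCommGroup E] (s a : ℝ)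
    (u : (ι → ℝ) → ℝ → E) :
    tanSobolevNorm s a (fun ξ : EuclideanSpace ℝ ι ↦ u ξ.ofLp) =
      √(∫ ξ, ∫ z in Iio a, (1 + ∑ i, ξ i ^ 2) ^ s * ‖u ξ z‖ ^ 2) := by
  rw [tanSobolevNorm,
    ← (EuclideanSpace.volume_preserving_symm_measurableEquiv_toLp ι).integral_comp']
  simp [EuclideanSpace.real_norm_sq_eq]

theorem exists_schwartzMap_eq_comp_ofLp {ι W E : Type*} [Fintype ι] [NormedAddCommGroup W]
    [NormedSpace ℝ W] [NormedAddCommGroup E] [NormedSpace ℝ E] {f : (ι → ℝ) × W → E}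
    (hsmooth : ContDiff ℝ (⊤ : ℕ∞) f) (hsupp : HasCompactSupport f) :
    ∃ g : 𝓢(EuclideanSpace ℝ ι × W, E), ⇑g = fun x ↦ f (x.1.ofLp, x.2) :=
  let e := (EuclideanSpace.equiv ι ℝ).prodCongr (.refl ℝ W)
  ⟨(hsupp.comp_homeomorph e.toHomeomorph).toSchwartzMap (hsmooth.comp e.contDiff), rfl⟩

end Coordinates

/-- Anisotropic Sobolev embedding (2.4) of Proposition 2.2:
for `s₁, s₂ ≥ 0` with `s₁ + s₂ > 2`, `‖f‖²_{L^∞(S)} ≲ ‖∂_z f‖_{H^{s₂}_tan} ‖f‖_{H^{s₁}_tan}`. -/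
theorem anisotropic_sobolev (s₁ s₂ : ℝ) (hs₁ : 0 ≤ s₁) (hs₂ : 0 ≤ s₂) (hs : 2 < s₁ + s₂) :
    ∃ C : ℝ, 0 < C ∧
      ∀ f : ((Fin 2 → ℝ) × ℝ) → ℂ, ContDiff ℝ (⊤ : ℕ∞) f → HasCompactSupport f →
        ∀ (y : Fin 2 → ℝ) (z : ℝ), z ≤ 0 →
          ‖f (y, z)‖ ^ 2
            ≤ C *
              Real.sqrt (∫ ξ : Fin 2 → ℝ, ∫ z' in Set.Iio (0 : ℝ),
                  ((1 : ℝ) + ∑ i : Fin 2, ξ i ^ 2) ^ s₂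
                    * ‖deriv (partialFourier f ξ) z'‖ ^ 2) *
              Real.sqrt (∫ ξ : Fin 2 → ℝ, ∫ z' in Set.Iio (0 : ℝ),
                  ((1 : ℝ) + ∑ i : Fin 2, ξ i ^ 2) ^ s₁
                    * ‖partialFourier f ξ z'‖ ^ 2) := by
  obtain ⟨C, hC, hbound⟩ := anisotropic_sobolev_general (V := EuclideanSpace ℝ (Fin 2)) (E := ℂ)
    (s₁ := s₁) (s₂ := s₂) (by simpa using hs)
  refine ⟨C, hC, fun f hsmooth hsupp y z hz ↦ ?_⟩
  obtain ⟨g, hg⟩ := exists_schwartzMap_eq_comp_ofLp hsmooth hsupp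
  have h := hbound g 0 (WithLp.toLp 2 y) z hz
  simp only [hg, tangentialFourier_comp_ofLp] at h
  rwa [tanSobolevNorm_comp_ofLp s₂ 0 fun ξ ↦ deriv (partialFourier f ξ),
    tanSobolevNorm_comp_ofLp s₁ 0 (partialFourier f)] at h
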